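/- Let V_ν, V_π : ℝ^d → ℝ be differentiable with Lipschitz gradients, satisfying the dissipativity conditions ⟨∇V_ν(x), x⟩ ≥ a_ν‖x‖² − b_ν and ⟨∇V_π(x), x⟩ ≥ a_π‖x‖² − b_π for all x, with a_ν, a_π, b_ν, b_π > 0. For λ ∈ [0,1] let μ_λ be the probability density proportional to exp(−(1−λ)V_ν(x) − λV_π(x)). Then the second moment of μ_λ satisfies ∫ ‖x‖² dμ_λ(x) ≤ (d + b_ν + b_π) / min(a_ν, a_π). -/

import Mathlib

open MeasureTheory Real RealInnerProductSpace

/-!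
Compare the integral of `exp (-V)` with that of its dilate `x ↦ exp (-V (r⁻¹ • x))`, which is
`r ^ d` times as large. For `r ≥ 1`, dissipativity bounds `V x - V (r⁻¹ • x)` from below by
`(r - 1) * (a * ‖r⁻¹ • x‖ ^ 2 - b)`, so `1 + t ≤ exp t` turns the comparison into a bound on the
second moment, which becomes `a * 𝔼 ‖x‖ ^ 2 - b ≤ d` after division by `r - 1` and `r → 1`; this
plays the role of the integration by parts `𝔼 ⟪∇V x, x⟫ = d`. The tempered potential is a convex
combination of dissipative potentials, hence itself dissipative.
-/

open Module Filter Topology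

/-- Dissipativity of a potential with constants `a` and `b`, where `⟪∇V x, x⟫` is encoded as the
directional derivative `fderiv ℝ V x x`, so that the notion makes sense in any normed space.
Differentiability of `V` and positivity of `a` and `b` are left out of the definition. -/
def IsDissipative {E : Type*} [NormedAddCommGroup E] [NormedSpace ℝ E]
    (V : E → ℝ) (a b : ℝ) : Prop :=
  ∀ x, a * ‖x‖ ^ 2 - b ≤ fderiv ℝ V x x

namespace IsDissipative

section NormedSpace

variable {E : Type*} [NormedAddCommGroup E] [NormedSpace ℝ E]
  {V W : E → ℝ} {a b a' b' : ℝ}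

theorem nonneg (h : IsDissipative V a b) : 0 ≤ b := by
  simpa using h 0

theorem mono (h : IsDissipative V a b) (ha : a' ≤ a) (hb : b ≤ b') : IsDissipative V a' b' :=
  fun x ↦ le_trans (by gcongr) (h x)

theorem add (hV : IsDissipative V a b) (hW : IsDissipative W a' b')
    (hdV : Differentiable ℝ V) (hdW : Differentiable ℝ W) :
    IsDissipative (fun x ↦ V x + W x) (a + a') (b + b') := fun x ↦ by
  rw [fderiv_fun_add (hdV x) (hdW x), add_apply]
  linarith [hV x, hW x]

theorem const_mul (hV : IsDissipative V a b) (hdV : Differentiable ℝ V) {t : ℝ} (ht : 0 ≤ t) :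
    IsDissipative (fun x ↦ t * V x) (t * a) (t * b) := fun x ↦ by
  rw [fderiv_const_mul (hdV x), smul_apply, smul_eq_mul]
  linarith [mul_le_mul_of_nonneg_left (hV x) ht]

theorem convex_combination (hV : IsDissipative V a b) (hW : IsDissipative W a' b')
    (hdV : Differentiable ℝ V) (hdW : Differentiable ℝ W) {t : ℝ} (ht : t ∈ Set.Icc (0 : ℝ) 1) :
    IsDissipative (fun x ↦ (1 - t) * V x + t * W x) (min a a') (b + b') := by
  have ht' : 0 ≤ 1 - t := sub_nonneg.2 ht.2
  refine ((hV.const_mul hdV ht').add (hW.const_mul hdW ht.1) (hdV.const_mul _)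
    (hdW.const_mul _)).mono ?_ ?_
  · exact Convex.min_le_combo a a' ht' ht.1 (sub_add_cancel 1 t)
  · exact add_le_add (mul_le_of_le_one_left hV.nonneg (sub_le_self 1 ht.1))
      (mul_le_of_le_one_left hW.nonneg ht.2)

theorem mul_sub_one_le_apply_smul_sub (h : IsDissipative V a b) (hdV : Differentiable ℝ V)
    (ha : 0 ≤ a) {r : ℝ} (hr : 1 ≤ r) (x : E) :
    (a * ‖x‖ ^ 2 - b) * (r - 1) ≤ V (r • x) - V x := by
  have hderiv (t : ℝ) : HasDerivAt (fun t : ℝ ↦ V (t • x)) (fderiv ℝ V (t • x) x) t := by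
    have hline : HasDerivAt (fun t : ℝ ↦ t • x) x t := by
      simpa using (hasDerivAt_id t).smul_const x
    exact (hdV (t • x)).hasFDerivAt.comp_hasDerivAt t hline
  have hslope : ∀ t ∈ interior (Set.Ici (1 : ℝ)),
      a * ‖x‖ ^ 2 - b ≤ deriv (fun t : ℝ ↦ V (t • x)) t := by
    intro t ht
    have ht1 : 1 < t := by simpa using ht
    have ht0 : 0 < t := one_pos.trans ht1
    rw [(hderiv t).deriv]
    refine le_of_mul_le_mul_left ?_ ht0
    calc t * (a * ‖x‖ ^ 2 - b) ≤ a * (t * ‖x‖) ^ 2 - b := by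
          have : 0 ≤ (t - 1) * (t * (a * ‖x‖ ^ 2) + b) :=
            mul_nonneg (sub_nonneg.2 ht1.le) (add_nonneg (by positivity) h.nonneg)
          linarith
      _ ≤ t * fderiv ℝ V (t • x) x := by
          simpa [norm_smul, abs_of_pos ht0] using h (t • x)
  simpa using (convex_Ici 1).mul_sub_le_image_sub_of_le_deriv
    (fun t _ ↦ (hderiv t).continuousAt.continuousWithinAt)
    (fun t _ ↦ (hderiv t).differentiableAt.differentiableWithinAt) hslope
    1 Set.self_mem_Ici r hr hr

end NormedSpace

section ProperSpace

variable {E : Type*} [NormedAddCommGroup E] [NormedSpace ℝ E] [ProperSpace E]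
  {V : E → ℝ} {a b : ℝ}

theorem exists_add_norm_le (h : IsDissipative V a b) (hdV : Differentiable ℝ V) (ha : 0 < a) :
    ∃ c, ∀ x, c + ‖x‖ ≤ V x := by
  obtain ⟨R, hRb, hR⟩ : ∃ R : ℝ, R ≤ a * R ^ 2 - b ∧ 0 < R := by
    have hlim : Tendsto (fun R : ℝ ↦ R * (a * R - 1)) atTop atTop :=
      tendsto_id.atTop_mul_atTop₀
        (tendsto_atTop_add_const_right _ _ (tendsto_id.const_mul_atTop ha))
    obtain ⟨R, hRb, hR⟩ := ((hlim.eventually_ge_atTop b).and (eventually_gt_atTop 0)).exists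
    exact ⟨R, by linarith, hR⟩
  obtain ⟨m, hm⟩ :=
    ((isCompact_closedBall (0 : E) R).image hdV.continuous).bddBelow
  replace hm (x : E) (hx : ‖x‖ ≤ R) : m ≤ V x := hm ⟨x, by simpa using hx, rfl⟩
  refine ⟨m - R, fun x ↦ ?_⟩
  rcases le_total ‖x‖ R with hx | hx
  · linarith [hm x hx]
  · have hx0 : 0 < ‖x‖ := hR.trans_le hx
    set u : E := (R / ‖x‖) • x with hu
    have hnorm : ‖u‖ = R := by
      rw [hu, norm_smul, norm_of_nonneg (by positivity), div_mul_cancel₀ _ hx0.ne']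
    have hsmul : (‖x‖ / R) • u = x := by
      rw [hu, smul_smul, div_mul_div_cancel₀ hR.ne', div_self hx0.ne', one_smul]
    have hr : 1 ≤ ‖x‖ / R := (one_le_div hR).2 hx
    calc m - R + ‖x‖ = m + R * (‖x‖ / R - 1) := by field_simp; ring
      _ ≤ V u + (a * ‖u‖ ^ 2 - b) * (‖x‖ / R - 1) := by
          rw [hnorm]
          exact add_le_add (hm u hnorm.le) (mul_le_mul_of_nonneg_right hRb (sub_nonneg.2 hr))
      _ ≤ V x := by
          have := h.mul_sub_one_le_apply_smul_sub hdV ha.le hr u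
          rw [hsmul] at this
          linarith

variable [MeasurableSpace E] [BorelSpace E] {μ : Measure E} [μ.HasTemperateGrowth]

theorem integrable_norm_pow_mul_exp_neg (h : IsDissipative V a b) (hdV : Differentiable ℝ V)
    (ha : 0 < a) (k : ℕ) : Integrable (fun x ↦ ‖x‖ ^ k * exp (-V x)) μ := by
  obtain ⟨c, hc⟩ := h.exists_add_norm_le hdV ha
  have hdecay (n : ℕ) (x : E) : ‖x‖ ^ n * ‖exp (-V x)‖ ≤ n.factorial * exp (-c) := by
    have hpow : ‖x‖ ^ n ≤ n.factorial * exp ‖x‖ :=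
      (div_le_iff₀' (by positivity)).1 (pow_div_factorial_le_exp _ (norm_nonneg x) n)
    calc ‖x‖ ^ n * ‖exp (-V x)‖ ≤ n.factorial * exp ‖x‖ * exp (-c - ‖x‖) := by
          rw [norm_of_nonneg (exp_pos _).le]
          gcongr
          linarith [hc x]
      _ = n.factorial * exp (-c) := by
          rw [mul_assoc, ← exp_add, add_sub_cancel]
  simpa using integrable_of_le_of_pow_mul_le (k := k)
    (fun x ↦ (one_mul _).symm.trans_le (hdecay 0 x)) (hdecay _)
    hdV.continuous.neg.rexp.aestronglyMeasurable

end ProperSpace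

section Haar

variable {E : Type*} [NormedAddCommGroup E] [NormedSpace ℝ E] [FiniteDimensional ℝ E]
  [MeasurableSpace E] [BorelSpace E] {μ : Measure E} [μ.IsAddHaarMeasure]
  {V : E → ℝ} {a b : ℝ}

theorem sub_one_mul_integral_sub_le_pow_sub_one_mul (h : IsDissipative V a b)
    (hdV : Differentiable ℝ V) (ha : 0 < a) {r : ℝ} (hr : 1 ≤ r) :
    (r - 1) * (a * r⁻¹ ^ 2 * ∫ x, ‖x‖ ^ 2 * exp (-V x) ∂μ - b * ∫ x, exp (-V x) ∂μ)
      ≤ (r ^ finrank ℝ E - 1) * ∫ x, exp (-V x) ∂μ := by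
  have hr0 : 0 < r := one_pos.trans_le hr
  have hZ : Integrable (fun x ↦ exp (-V x)) μ := by
    simpa using h.integrable_norm_pow_mul_exp_neg hdV ha 0
  have hM := h.integrable_norm_pow_mul_exp_neg (μ := μ) hdV ha 2
  have hpointwise (x : E) :
      (r - 1) * (a * r⁻¹ ^ 2 * (‖x‖ ^ 2 * exp (-V x)) - b * exp (-V x)) + exp (-V x)
        ≤ exp (-V (r⁻¹ • x)) := by
    have hray := h.mul_sub_one_le_apply_smul_sub hdV ha.le hr (r⁻¹ • x)
    rw [smul_inv_smul₀ hr0.ne', norm_smul, norm_of_nonneg (inv_pos.2 hr0).le] at hray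
    calc _ = ((a * (r⁻¹ * ‖x‖) ^ 2 - b) * (r - 1) + 1) * exp (-V x) := by ring
      _ ≤ exp (V x - V (r⁻¹ • x)) * exp (-V x) := by
          gcongr
          exact (add_le_add_left hray 1).trans (add_one_le_exp _)
      _ = exp (-V (r⁻¹ • x)) := by rw [← exp_add]; ring_nf
  have hdiff := (hM.const_mul (a * r⁻¹ ^ 2)).sub (hZ.const_mul b)
  have hle := integral_mono ((hdiff.const_mul (r - 1)).add hZ)
    ((integrable_comp_smul_iff μ _ (inv_ne_zero hr0.ne')).2 hZ) hpointwise
  rw [Measure.integral_comp_inv_smul_of_nonneg μ (fun x ↦ exp (-V x)) hr0.le, smul_eq_mul,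
    integral_add' (hdiff.const_mul _) hZ, integral_const_mul,
    integral_sub' (hM.const_mul _) (hZ.const_mul _), integral_const_mul, integral_const_mul] at hle
  linarith

theorem mul_integral_norm_sq_mul_exp_neg_le (h : IsDissipative V a b)
    (hdV : Differentiable ℝ V) (ha : 0 < a) :
    a * ∫ x, ‖x‖ ^ 2 * exp (-V x) ∂μ ≤ (finrank ℝ E + b) * ∫ x, exp (-V x) ∂μ := by
  set M := ∫ x, ‖x‖ ^ 2 * exp (-V x) ∂μ
  set Z := ∫ x, exp (-V x) ∂μ
  have hgeom : ∀ r ∈ Set.Ioi (1 : ℝ),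
      a * r⁻¹ ^ 2 * M - b * Z ≤ (∑ i ∈ Finset.range (finrank ℝ E), r ^ i) * Z := by
    intro r hr
    refine le_of_mul_le_mul_left ?_ (sub_pos.2 hr)
    rw [← mul_assoc (r - 1) (∑ i ∈ _, _), mul_geom_sum]
    exact h.sub_one_mul_integral_sub_le_pow_sub_one_mul hdV ha hr.le
  have hlim : a * (1 : ℝ)⁻¹ ^ 2 * M - b * Z
      ≤ (∑ i ∈ Finset.range (finrank ℝ E), (1 : ℝ) ^ i) * Z :=
    ContinuousWithinAt.closure_le (by simp)
      (ContinuousAt.continuousWithinAt (by fun_prop (disch := norm_num)))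
      (Continuous.continuousWithinAt (by fun_prop)) hgeom
  simp only [inv_one, one_pow, mul_one, Finset.sum_const, Finset.card_range, nsmul_eq_mul] at hlim
  linarith

theorem integral_norm_sq_mul_exp_neg_div_le (h : IsDissipative V a b)
    (hdV : Differentiable ℝ V) (ha : 0 < a) :
    (∫ x, ‖x‖ ^ 2 * exp (-V x) ∂μ) / (∫ x, exp (-V x) ∂μ) ≤ (finrank ℝ E + b) / a := by
  have hZ : 0 < ∫ x, exp (-V x) ∂μ :=
    integral_exp_pos (by simpa using h.integrable_norm_pow_mul_exp_neg (μ := μ) hdV ha 0)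
  rw [div_le_div_iff₀ hZ ha, mul_comm _ a]
  exact h.mul_integral_norm_sq_mul_exp_neg_le hdV ha

end Haar

end IsDissipative

theorem geometric_tempering_second_moment_bound_general
    {E : Type*} [NormedAddCommGroup E] [NormedSpace ℝ E] [FiniteDimensional ℝ E]
    [MeasurableSpace E] [BorelSpace E] (μ : Measure E) [μ.IsAddHaarMeasure]
    {Vnu Vpi : E → ℝ} {anu api bnu bpi : ℝ} (hanu : 0 < anu) (hapi : 0 < api)
    (hdnu : Differentiable ℝ Vnu) (hdpi : Differentiable ℝ Vpi)
    (hdissnu : IsDissipative Vnu anu bnu) (hdisspi : IsDissipative Vpi api bpi)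
    {lam : ℝ} (hlam : lam ∈ Set.Icc (0 : ℝ) 1) :
    (∫ x, ‖x‖ ^ 2 * exp (-((1 - lam) * Vnu x + lam * Vpi x)) ∂μ)
      / (∫ x, exp (-((1 - lam) * Vnu x + lam * Vpi x)) ∂μ)
      ≤ (finrank ℝ E + bnu + bpi) / min anu api := by
  rw [add_assoc]
  exact (hdissnu.convex_combination hdisspi hdnu hdpi hlam).integral_norm_sq_mul_exp_neg_div_le
    ((hdnu.const_mul _).add (hdpi.const_mul _)) (lt_min hanu hapi)

/-- If V_ν, V_π : ℝ^d → ℝ are differentiable with Lipschitz gradients and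
dissipative with constants (a_ν, b_ν), (a_π, b_π), then the geometric tempering density
μ_λ ∝ exp(−(1−λ)V_ν − λV_π) has second moment at most (d + b_ν + b_π)/min(a_ν, a_π). -/
theorem geometric_tempering_second_moment_bound
    (d : ℕ) (Vnu Vpi : EuclideanSpace ℝ (Fin d) → ℝ)
    (anu api bnu bpi : ℝ)
    (hanu : 0 < anu) (hapi : 0 < api) (hbnu : 0 < bnu) (hbpi : 0 < bpi)
    (hdnu : Differentiable ℝ Vnu) (hdpi : Differentiable ℝ Vpi)
    (hlipnu : ∃ Lnu : NNReal, LipschitzWith Lnu (fun x => gradient Vnu x))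
    (hlippi : ∃ Lpi : NNReal, LipschitzWith Lpi (fun x => gradient Vpi x))
    (hdissnu : ∀ x, anu * ‖x‖ ^ 2 - bnu ≤ ⟪gradient Vnu x, x⟫)
    (hdisspi : ∀ x, api * ‖x‖ ^ 2 - bpi ≤ ⟪gradient Vpi x, x⟫)
    (lam : ℝ) (hlam : lam ∈ Set.Icc (0 : ℝ) 1) :
    (∫ x : EuclideanSpace ℝ (Fin d),
        ‖x‖ ^ 2 * Real.exp (-((1 - lam) * Vnu x + lam * Vpi x)))
      / (∫ x : EuclideanSpace ℝ (Fin d), Real.exp (-((1 - lam) * Vnu x + lam * Vpi x)))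
      ≤ (d + bnu + bpi) / min anu api := by
  simpa using geometric_tempering_second_moment_bound_general volume hanu hapi hdnu hdpi
    (fun x ↦ (hdissnu x).trans_eq (inner_gradient_left ..))
    (fun x ↦ (hdisspi x).trans_eq (inner_gradient_left ..)) hlam
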